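/- Assume conditions (i)–(iii) hold, so E = A #_f H is a crossed product, and assume f is convolution invertible with inverse f^{-1}. Then the map γ : H → E, γ(h) = 1#h, is convolution invertible in the convolution algebra Hom_k(H, E) (with product (u * v)(h) = u(h^{(1)}) v(h^{(2)}) and unit h ↦ ε(h)1_E), and its convolution inverse is given by γ^{-1}(h) = f^{-1}(S(h^{(2)}), h^{(3)}) # S(h^{(1)}). -/

import Mathlib

open TensorProduct

noncomputable section CrossedProduct

variable (k A H : Type*) [CommRing k] [Ring A] [Algebra k A] [Ring H] [HopfAlgebra k H]

/-- A chosen "Sweedler representation" of the comultiplication of `H`: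
`comul h = ∑_{i < n h} c₁ h i ⊗ c₂ h i` for every `h`. -/
def IsSweedlerRep (n : H → ℕ) (c₁ c₂ : H → ℕ → H) : Prop :=
  ∀ h : H, Coalgebra.comul (R := k) h = ∑ i ∈ Finset.range (n h), c₁ h i ⊗ₜ[k] c₂ h i

/-- `σ` is a weak action of `H` on `A`: `(ab)^h = a^{h⁽¹⁾} b^{h⁽²⁾}`, `1^h = ε(h)1`, `a^1 = a`. -/
def IsWeakAction (n : H → ℕ) (c₁ c₂ : H → ℕ → H) (σ : H →ₗ[k] A →ₗ[k] A) : Prop :=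
  (∀ (h : H) (a b : A),
      σ h (a * b) = ∑ i ∈ Finset.range (n h), σ (c₁ h i) a * σ (c₂ h i) b) ∧
  (∀ h : H, σ h (1 : A) = Coalgebra.counit (R := k) h • (1 : A)) ∧
  (∀ a : A, σ (1 : H) a = a)

/-- Condition (i): normality of the cocycle `f`. -/
def IsNormal (f : H →ₗ[k] H →ₗ[k] A) : Prop :=
  ∀ h : H, f h (1 : H) = Coalgebra.counit (R := k) h • (1 : A) ∧
    f (1 : H) h = Coalgebra.counit (R := k) h • (1 : A)

/-- Condition (ii): the cocycle condition
`f(l⁽¹⁾,m⁽¹⁾)^{h⁽¹⁾} f(h⁽²⁾, l⁽²⁾m⁽²⁾) = f(h⁽¹⁾,l⁽¹⁾) f(h⁽²⁾l⁽²⁾, m)`. -/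
def IsCocycle (n : H → ℕ) (c₁ c₂ : H → ℕ → H) (σ : H →ₗ[k] A →ₗ[k] A)
    (f : H →ₗ[k] H →ₗ[k] A) : Prop :=
  ∀ h l m : H,
    (∑ i ∈ Finset.range (n h), ∑ j ∈ Finset.range (n l), ∑ p ∈ Finset.range (n m),
      σ (c₁ h i) (f (c₁ l j) (c₁ m p)) * f (c₂ h i) (c₂ l j * c₂ m p)) =
    ∑ i ∈ Finset.range (n h), ∑ j ∈ Finset.range (n l),
      f (c₁ h i) (c₁ l j) * f (c₂ h i * c₂ l j) m

/-- Condition (iii): the twisted module condition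
`(a^{l⁽¹⁾})^{h⁽¹⁾} f(h⁽²⁾,l⁽²⁾) = f(h⁽¹⁾,l⁽¹⁾) a^{h⁽²⁾l⁽²⁾}`. -/
def IsTwistedModule (n : H → ℕ) (c₁ c₂ : H → ℕ → H) (σ : H →ₗ[k] A →ₗ[k] A)
    (f : H →ₗ[k] H →ₗ[k] A) : Prop :=
  ∀ (h l : H) (a : A),
    (∑ i ∈ Finset.range (n h), ∑ j ∈ Finset.range (n l),
      σ (c₁ h i) (σ (c₁ l j) a) * f (c₂ h i) (c₂ l j)) =
    ∑ i ∈ Finset.range (n h), ∑ j ∈ Finset.range (n l),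
      f (c₁ h i) (c₁ l j) * σ (c₂ h i * c₂ l j) a

/-- `finv` is the convolution inverse of `f`:
`f(h⁽¹⁾,l⁽¹⁾) f⁻¹(h⁽²⁾,l⁽²⁾) = f⁻¹(h⁽¹⁾,l⁽¹⁾) f(h⁽²⁾,l⁽²⁾) = ε(h)ε(l)1_A`. -/
def IsConvInverse (n : H → ℕ) (c₁ c₂ : H → ℕ → H) (f finv : H →ₗ[k] H →ₗ[k] A) : Prop :=
  ∀ h l : H,
    (∑ i ∈ Finset.range (n h), ∑ j ∈ Finset.range (n l),
        f (c₁ h i) (c₁ l j) * finv (c₂ h i) (c₂ l j) =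
      (Coalgebra.counit (R := k) h * Coalgebra.counit (R := k) l) • (1 : A)) ∧
    (∑ i ∈ Finset.range (n h), ∑ j ∈ Finset.range (n l),
        finv (c₁ h i) (c₁ l j) * f (c₂ h i) (c₂ l j) =
      (Coalgebra.counit (R := k) h * Coalgebra.counit (R := k) l) • (1 : A))

/-- The multiplication of `A #_f H` as a bilinear map on `A ⊗[k] H`:
`(a # h)(b # l) = a b^{h⁽¹⁾} f(h⁽²⁾, l⁽¹⁾) # h⁽³⁾ l⁽²⁾`. -/
def crossedMul (σ : H →ₗ[k] A →ₗ[k] A) (f : H →ₗ[k] H →ₗ[k] A) :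
    (A ⊗[k] H) →ₗ[k] (A ⊗[k] H) →ₗ[k] (A ⊗[k] H) :=
  TensorProduct.lift
    (((LinearMap.llcomp k (A ⊗[k] H) (A ⊗[k] H) (A ⊗[k] H)).comp
        (TensorProduct.curry
          ((LinearMap.rTensor H (LinearMap.mul' k A)) ∘ₗ
            (TensorProduct.assoc k A A H).symm.toLinearMap))).compl₂
      (TensorProduct.curry
        ((LinearMap.rTensor H (LinearMap.mul' k A)) ∘ₗ
         (TensorProduct.map
            (TensorProduct.map (TensorProduct.lift σ) (TensorProduct.lift f))
            (LinearMap.mul' k H)) ∘ₗ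
         (LinearMap.rTensor (H ⊗[k] H)
            (TensorProduct.tensorTensorTensorComm k H H A H).toLinearMap) ∘ₗ
         (TensorProduct.tensorTensorTensorComm k (H ⊗[k] H) H (A ⊗[k] H) H).toLinearMap ∘ₗ
         (TensorProduct.map
            ((LinearMap.rTensor H (Coalgebra.comul (R := k))) ∘ₗ (Coalgebra.comul (R := k)))
            ((TensorProduct.assoc k A H H).symm.toLinearMap ∘ₗ
              (LinearMap.lTensor A (Coalgebra.comul (R := k))))))))

/-- The unit `1 # 1` of the crossed product. -/
def oneE : A ⊗[k] H := (1 : A) ⊗ₜ[k] (1 : H)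

/-- The map `γ : H → A #_f H`, `γ(h) = 1 # h`. -/
def gam : H →ₗ[k] A ⊗[k] H := TensorProduct.mk k A H 1

/-- The map `h ↦ f⁻¹(S(h⁽²⁾), h⁽³⁾) # S(h⁽¹⁾)`, the convolution inverse of `γ`. -/
def gammaInv (finv : H →ₗ[k] H →ₗ[k] A) : H →ₗ[k] A ⊗[k] H :=
  (TensorProduct.comm k H A).toLinearMap ∘ₗ
    (TensorProduct.map (HopfAlgebra.antipode (R := k))
      ((TensorProduct.lift finv) ∘ₗ (LinearMap.rTensor H (HopfAlgebra.antipode (R := k))))) ∘ₗ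
    (LinearMap.lTensor H (Coalgebra.comul (R := k))) ∘ₗ (Coalgebra.comul (R := k))

/-- The canonical coaction `ν = id_A ⊗ Δ : A #_f H → (A #_f H) ⊗ H`. -/
def nuE : (A ⊗[k] H) →ₗ[k] (A ⊗[k] H) ⊗[k] H :=
  (TensorProduct.assoc k A H H).symm.toLinearMap ∘ₗ
    (LinearMap.lTensor A (Coalgebra.comul (R := k)))

/-- Convolution product on `Hom_k(H, A #_f H)`: `(u * v)(h) = u(h⁽¹⁾) v(h⁽²⁾)`. -/
def convMul (σ : H →ₗ[k] A →ₗ[k] A) (f : H →ₗ[k] H →ₗ[k] A)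
    (u v : H →ₗ[k] A ⊗[k] H) : H →ₗ[k] A ⊗[k] H :=
  (TensorProduct.lift (crossedMul k A H σ f)) ∘ₗ (TensorProduct.map u v) ∘ₗ
    (Coalgebra.comul (R := k))

/-- The unit of the convolution algebra `Hom_k(H, A #_f H)`: `h ↦ ε(h) 1_E`. -/
def convOne : H →ₗ[k] A ⊗[k] H :=
  (LinearMap.toSpanSingleton k (A ⊗[k] H) (oneE k A H)) ∘ₗ (Coalgebra.counit (R := k))

/-- Sum over iterated (right-nested) Sweedler components:
`swSum n c₁ c₂ r h F = ∑ F (h⁽¹⁾, …, h⁽ʳ⁺¹⁾)`. -/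
def swSum {M : Type*} [AddCommMonoid M] (n : H → ℕ) (c₁ c₂ : H → ℕ → H) :
    (r : ℕ) → H → ((Fin (r + 1) → H) → M) → M
  | 0, h, F => F (fun _ => h)
  | (r + 1), h, F =>
      ∑ i ∈ Finset.range (n h), swSum n c₁ c₂ r (c₂ h i) (fun g => F (Fin.cons (c₁ h i) g))

/-- The product of a list of elements of the crossed product. -/
def prodE (σ : H →ₗ[k] A →ₗ[k] A) (f : H →ₗ[k] H →ₗ[k] A) :
    List (A ⊗[k] H) → A ⊗[k] H
  | [] => oneE k A H
  | x :: L => crossedMul k A H σ f x (prodE σ f L)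

end CrossedProduct

/-!
The convolution algebra `Hom(H ⊗ H, A)` acts on `A ⊗ (H ⊗ H)` from the right by
`(a ⊗ c) · g = a g(c⁽¹⁾) ⊗ c⁽²⁾`, and the product `e γ(l)` is the action of `f` on `e ⊗ l` followed
by the multiplication of `H`. Put `δ(h) = f⁻¹(S(h⁽²⁾), h⁽³⁾) # S(h⁽¹⁾)`. Then `δ * γ = 1` because
`f⁻¹ * f = 1`. The map `u ↦ u * γ` is injective, since the actions of `f` and of `id : H → H` are
undone by those of `f⁻¹` and `S`. Hence `γ * δ = 1` follows from
`(γ * δ) * γ = γ * (δ * γ) = γ = 1 * γ`. The instance of associativity used here has the form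
`(γ(h) e) γ(l) = γ(h) (e γ(l))`, and this is the cocycle condition.
-/

open Coalgebra HopfAlgebra WithConv

namespace CrossedProduct

section Counit

variable {R C ι : Type*} [CommSemiring R] [AddCommMonoid C] [Module R C] [Coalgebra R C] {c : C}

lemma sum_smul_counit (𝓡 : Repr R c ι) :
    ∑ i ∈ 𝓡.index, counit (R := R) (𝓡.right i) • 𝓡.left i = c := by
  simpa only [map_sum, TensorProduct.rid_tmul, one_smul] using
    congrArg (TensorProduct.rid R C) (sum_tmul_counit_eq 𝓡)

lemma sum_counit_smul_tmul {M : Type*} [AddCommMonoid M] [Module R M] (m : M)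
    (𝓡 : Repr R c ι) :
    ∑ i ∈ 𝓡.index, (counit (R := R) (𝓡.left i) • m) ⊗ₜ[R] 𝓡.right i = m ⊗ₜ c := by
  simp_rw [smul_tmul, ← tmul_sum, sum_counit_smul]

end Counit

section RightConv

variable {R A C D ι κ : Type*} [CommSemiring R] [Semiring A] [Algebra R A]
  [AddCommMonoid C] [Module R C] [Coalgebra R C] [AddCommMonoid D] [Module R D]

/-- The right action of the convolution algebra `Hom(C, A)` on `A ⊗ C`, given by
`a ⊗ c ↦ a g(c⁽¹⁾) ⊗ c⁽²⁾`. -/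
noncomputable def rightConv (g : WithConv (C →ₗ[R] A)) : A ⊗[R] C →ₗ[R] A ⊗[R] C :=
  (LinearMap.mul' R A).rTensor C ∘ₗ (TensorProduct.assoc R A A C).symm.toLinearMap ∘ₗ
    (g.ofConv.rTensor C ∘ₗ comul).lTensor A

lemma rightConv_tmul (g : WithConv (C →ₗ[R] A)) (a : A) {c : C} (𝓡 : Repr R c ι) :
    rightConv g (a ⊗ₜ c) = ∑ i ∈ 𝓡.index, (a * g (𝓡.left i)) ⊗ₜ[R] 𝓡.right i := by
  simp [rightConv, ← 𝓡.eq, tmul_sum]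

lemma rightConv_tmul_tmul [Coalgebra R D] (g : WithConv (C ⊗[R] D →ₗ[R] A)) (a : A) {c : C} {d : D}
    (𝓡 : Repr R c ι) (𝓢 : Repr R d κ) :
    rightConv g (a ⊗ₜ (c ⊗ₜ d)) = ∑ i ∈ 𝓡.index, ∑ j ∈ 𝓢.index,
      (a * g (𝓡.left i ⊗ₜ 𝓢.left j)) ⊗ₜ[R] (𝓡.right i ⊗ₜ[R] 𝓢.right j) := by
  simp [rightConv, ← 𝓡.eq, ← 𝓢.eq, tmul_sum, sum_tmul, Finset.sum_comm (s := 𝓢.index)]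

@[simp]
lemma rightConv_one : rightConv (1 : WithConv (C →ₗ[R] A)) = .id := by
  refine TensorProduct.ext' fun a c ↦ ?_
  simp only [rightConv_tmul _ _ (ℛ R c), LinearMap.convOne_apply, ← Algebra.commutes,
    ← Algebra.smul_def, smul_tmul, ← tmul_sum, sum_counit_smul, LinearMap.id_apply]

lemma rightConv_mul (g g' : WithConv (C →ₗ[R] A)) :
    rightConv (g * g') = rightConv g' ∘ₗ rightConv g := by
  refine TensorProduct.ext' fun a c ↦ ?_
  have coassoc := congrArg
    ((LinearMap.mulLeft R a ∘ₗ LinearMap.mul' R A ∘ₗ map g.ofConv g'.ofConv).rTensor C ∘ₗ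
      (TensorProduct.assoc R C C C).symm.toLinearMap)
    (sum_tmul_tmul_eq (ℛ R c) (fun i ↦ ℛ R ((ℛ R c).left i)) (fun i ↦ ℛ R ((ℛ R c).right i)))
  simp only [rightConv_tmul _ _ (ℛ R _), LinearMap.comp_apply, map_sum, (ℛ R _).convMul_apply,
    Finset.mul_sum, sum_tmul]
  simpa [mul_assoc] using coassoc

lemma rightConv_injective {g g' : WithConv (C →ₗ[R] A)} (hg : g * g' = 1) :
    Function.Injective (rightConv g) :=
  Function.LeftInverse.injective (g := rightConv g') fun y ↦ by
    rw [← LinearMap.comp_apply, ← rightConv_mul, hg, rightConv_one, LinearMap.id_apply]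

lemma lTensor_rightConv [Coalgebra R D] {φ : C →ₗ[R] D} (hφ : map φ φ ∘ₗ comul = comul ∘ₗ φ)
    (g : D →ₗ[R] A) (y : A ⊗[R] C) :
    φ.lTensor A (rightConv (toConv (g ∘ₗ φ)) y) = rightConv (toConv g) (φ.lTensor A y) := by
  induction y with
  | zero => simp
  | add y z hy hz => simp only [map_add, hy, hz]
  | tmul a c =>
    have comul_map : comul (φ c) = map φ φ (comul c) := (LinearMap.congr_fun hφ c).symm
    simp [rightConv, comul_map, ← (ℛ R c).eq, tmul_sum]

lemma assoc_rightConv_tmul [Coalgebra R D] (g : C →ₗ[R] A) (y : A ⊗[R] C) (d : D) :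
    TensorProduct.assoc R A C D (rightConv (toConv g) y ⊗ₜ d) =
      rightConv (toConv ((TensorProduct.rid R A).toLinearMap ∘ₗ map g counit))
        (TensorProduct.assoc R A C D (y ⊗ₜ d)) := by
  induction y with
  | zero => simp
  | add y z hy hz => simp [add_tmul, hy, hz]
  | tmul a c =>
    simp [rightConv_tmul _ _ (ℛ R c), rightConv_tmul_tmul _ _ (ℛ R c) (ℛ R d), sum_tmul,
      smul_tmul, ← tmul_smul, ← tmul_sum, sum_counit_smul]

end RightConv

section Antipode

variable {R H : Type*} [CommSemiring R] [Semiring H] [HopfAlgebra R H]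

/- Both sides are convolution inverses of `comul`, which is the convolution product of the two
inclusions of `H` into `H ⊗ H`. -/
lemma comul_comp_antipode :
    comul ∘ₗ antipode R (A := H) =
      map (antipode R) (antipode R) ∘ₗ (TensorProduct.comm R H H).toLinearMap ∘ₗ comul := by
  let iₗ : H →ₐ[R] H ⊗[R] H := Algebra.TensorProduct.includeLeft
  let iᵣ : H →ₐ[R] H ⊗[R] H := Algebra.TensorProduct.includeRight
  have comp_antipode_mul (i : H →ₐ[R] H ⊗[R] H) :
      toConv (i.toLinearMap ∘ₗ antipode R) * toConv i.toLinearMap = 1 := by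
    have := congrArg (fun g ↦ toConv (i.toLinearMap ∘ₗ ofConv g))
      (LinearMap.antipode_mul_id (R := R) (C := H))
    simp only [LinearMap.algHom_comp_convMul_distrib] at this
    exact this.trans (by ext; simp)
  have comul_eq : toConv comul = toConv iₗ.toLinearMap * toConv iᵣ.toLinearMap := by
    ext h
    simp [(ℛ R h).convMul_apply, iₗ, iᵣ, (ℛ R h).eq]
  have swap_eq :
      toConv (map (antipode R) (antipode R) ∘ₗ (TensorProduct.comm R H H).toLinearMap ∘ₗ comul) =
        toConv (iᵣ.toLinearMap ∘ₗ antipode R) * toConv (iₗ.toLinearMap ∘ₗ antipode R) := by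
    ext h
    simp [(ℛ R h).convMul_apply, iₗ, iᵣ, ← (ℛ R h).eq]
  refine toConv_injective (left_inv_eq_right_inv ?_ LinearMap.comul_right_inv).symm
  rw [swap_eq, comul_eq, mul_assoc, ← mul_assoc (toConv (iₗ.toLinearMap ∘ₗ antipode R)),
    comp_antipode_mul, one_mul, comp_antipode_mul]

lemma lTensor_rightConv_id_injective {M : Type*} [AddCommMonoid M] [Module R M] :
    Function.Injective ((rightConv (toConv (.id : H →ₗ[R] H))).lTensor M) :=
  Function.LeftInverse.injective (g := (rightConv (toConv (antipode R))).lTensor M) fun y ↦ by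
    rw [← LinearMap.comp_apply, ← LinearMap.lTensor_comp, ← rightConv_mul,
      LinearMap.id_mul_antipode, rightConv_one, LinearMap.lTensor_id, LinearMap.id_apply]

end Antipode

section ActMap

variable {R A H D D' ι : Type*} [CommSemiring R] [AddCommMonoid A] [Module R A]
  [AddCommMonoid H] [Module R H] [Coalgebra R H] [AddCommMonoid D] [Module R D]
  [AddCommMonoid D'] [Module R D'] {σ : H →ₗ[R] A →ₗ[R] A}

/-- The left multiplication by `1 # h` before the cocycle is applied:
`a ⊗ d ↦ a^{h⁽¹⁾} ⊗ (h⁽²⁾ ⊗ d)`. -/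
noncomputable def actMap (σ : H →ₗ[R] A →ₗ[R] A) (D : Type*) [AddCommMonoid D] [Module R D]
    (h : H) : A ⊗[R] D →ₗ[R] A ⊗[R] (H ⊗[R] D) :=
  (TensorProduct.lift σ).rTensor (H ⊗[R] D) ∘ₗ
    (TensorProduct.tensorTensorTensorComm R H H A D).toLinearMap ∘ₗ
      TensorProduct.mk R (H ⊗[R] H) (A ⊗[R] D) (comul h)

lemma actMap_tmul {h : H} (𝓡 : Repr R h ι) (a : A) (d : D) :
    actMap σ D h (a ⊗ₜ d) =
      ∑ i ∈ 𝓡.index, σ (𝓡.left i) a ⊗ₜ[R] (𝓡.right i ⊗ₜ[R] d) := by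
  simp [actMap, ← 𝓡.eq]

lemma actMap_lTensor (ψ : D →ₗ[R] D') (h : H) (y : A ⊗[R] D) :
    actMap σ D' h (ψ.lTensor A y) = (ψ.lTensor H).lTensor A (actMap σ D h y) := by
  induction y with
  | zero => simp
  | add y z hy hz => simp [hy, hz]
  | tmul a d => simp [actMap_tmul (ℛ R h)]

lemma actMap_assoc_tmul (h : H) (y : A ⊗[R] D) (d : D') :
    actMap σ (D ⊗[R] D') h (TensorProduct.assoc R A D D' (y ⊗ₜ d)) =
      (TensorProduct.assoc R H D D').toLinearMap.lTensor A
        (TensorProduct.assoc R A (H ⊗[R] D) D' (actMap σ D h y ⊗ₜ d)) := by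
  induction y with
  | zero => simp
  | add y z hy hz => simp [add_tmul, hy, hz]
  | tmul a c => simp [actMap_tmul (ℛ R h), sum_tmul]

end ActMap

section CocycleMul

variable {R A H : Type*} [CommSemiring R] [Semiring A] [Algebra R A] [Semiring H] [Bialgebra R H]
  {f : H →ₗ[R] H →ₗ[R] A}

/-- The multiplication of `A #_f H` with the action left out:
`a ⊗ (h ⊗ l) ↦ a f(h⁽¹⁾, l⁽¹⁾) # h⁽²⁾l⁽²⁾`. -/
noncomputable def cocycleMul (f : H →ₗ[R] H →ₗ[R] A) : A ⊗[R] (H ⊗[R] H) →ₗ[R] A ⊗[R] H :=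
  (LinearMap.mul' R H).lTensor A ∘ₗ rightConv (toConv (TensorProduct.lift f))

lemma cocycleMul_assoc_cocycleMul_tmul (y : A ⊗[R] (H ⊗[R] H)) (l : H) :
    cocycleMul f (TensorProduct.assoc R A H H (cocycleMul f y ⊗ₜ l)) =
      (LinearMap.mul' R H ∘ₗ (LinearMap.mul' R H).rTensor H).lTensor A
        (rightConv
          (toConv ((TensorProduct.rid R A).toLinearMap ∘ₗ map (TensorProduct.lift f) counit) *
            toConv (TensorProduct.lift f ∘ₗ (LinearMap.mul' R H).rTensor H))
          (TensorProduct.assoc R A (H ⊗[R] H) H (y ⊗ₜ l))) := by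
  have comul_rTensor_mul :
      map ((LinearMap.mul' R H).rTensor H) ((LinearMap.mul' R H).rTensor H) ∘ₗ comul =
        comul ∘ₗ (LinearMap.mul' R H).rTensor H := by
    ext x y z
    simp [← (ℛ R x).eq, ← (ℛ R y).eq, ← (ℛ R z).eq, sum_tmul, tmul_sum, Finset.sum_mul_sum,
      Finset.sum_comm (s := (ℛ R y).index)]
  have assoc_lTensor_tmul (y : A ⊗[R] (H ⊗[R] H)) :
      TensorProduct.assoc R A H H ((LinearMap.mul' R H).lTensor A y ⊗ₜ l) =
        ((LinearMap.mul' R H).rTensor H).lTensor A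
          (TensorProduct.assoc R A (H ⊗[R] H) H (y ⊗ₜ l)) := by
    induction y with
    | zero => simp
    | add y z hy hz => simp [add_tmul, hy, hz]
    | tmul a c => simp
  simp only [cocycleMul, LinearMap.comp_apply, LinearMap.lTensor_comp, rightConv_mul,
    ← assoc_rightConv_tmul, assoc_lTensor_tmul]
  exact congrArg _ (lTensor_rightConv comul_rTensor_mul _ _).symm

lemma lTensor_rightConv_id_rightConv_assoc_tmul (e : A ⊗[R] H) {l : H} {ι : Type*}
    (𝓡 : Repr R l ι) :
    (rightConv (toConv .id)).lTensor A (rightConv (toConv (TensorProduct.lift f))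
        (TensorProduct.assoc R A H H (e ⊗ₜ l))) =
      ∑ j ∈ 𝓡.index, TensorProduct.assoc R A H H
        (cocycleMul f (TensorProduct.assoc R A H H (e ⊗ₜ 𝓡.left j)) ⊗ₜ 𝓡.right j) := by
  induction e with
  | zero => simp
  | add x y hx hy => simp [add_tmul, hx, hy, Finset.sum_add_distrib]
  | tmul a h =>
    have coassoc (x y : H) := congrArg
      (map (LinearMap.mulLeft R a ∘ₗ f x) ((LinearMap.mulLeft R y).rTensor H))
      (sum_tmul_tmul_eq 𝓡 (fun i ↦ ℛ R (𝓡.left i)) (fun i ↦ ℛ R (𝓡.right i)))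
    simp only [rightConv_tmul_tmul _ _ (ℛ R h) 𝓡, rightConv_tmul_tmul _ _ (ℛ R h) (ℛ R _),
      rightConv_tmul _ _ (ℛ R _), assoc_tmul, cocycleMul, LinearMap.comp_apply,
      LinearMap.lTensor_tmul, LinearMap.id_apply, LinearMap.mul'_apply, lift.tmul, map_sum,
      tmul_sum, sum_tmul, Finset.sum_comm (s := 𝓡.index)]
    exact Finset.sum_congr rfl fun i _ ↦ by simpa using (coassoc _ _).symm

end CocycleMul

section Graph

variable {R M C : Type*} [CommSemiring R] [AddCommMonoid M] [Module R M]
  [AddCommMonoid C] [Module R C] [Coalgebra R C]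

/-- The graph `c ↦ u(c⁽¹⁾) ⊗ c⁽²⁾` of `u : C → M ⊗ C`, with the tensor product reassociated. For
`u : H → A #_f H` the convolution product `u * γ` is a linear function of the graph of `u`. -/
noncomputable def graph (u : C →ₗ[R] M ⊗[R] C) : C →ₗ[R] M ⊗[R] (C ⊗[R] C) :=
  (TensorProduct.assoc R M C C).toLinearMap ∘ₗ u.rTensor C ∘ₗ comul

lemma graph_injective : Function.Injective (graph : (C →ₗ[R] M ⊗[R] C) → _) :=
  Function.LeftInverse.injective
    (g := fun w ↦ (TensorProduct.rid R (M ⊗[R] C)).toLinearMap ∘ₗ counit.lTensor (M ⊗[R] C) ∘ₗ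
      (TensorProduct.assoc R M C C).symm.toLinearMap ∘ₗ w) fun u ↦ by
    ext h
    simp [graph, ← (ℛ R h).eq]

end Graph

variable {k A H : Type*} [CommRing k] [Ring A] [Algebra k A] [Ring H] [HopfAlgebra k H]
  {n : H → ℕ} {c₁ c₂ : H → ℕ → H} {σ : H →ₗ[k] A →ₗ[k] A} {f finv : H →ₗ[k] H →ₗ[k] A}

/-- A Sweedler representation, as a representation of `comul h` in the sense of `Coalgebra.Repr`. -/
@[simps]
def sweedlerRepr (hrep : IsSweedlerRep k H n c₁ c₂) (h : H) : Repr k h ℕ where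
  index := .range (n h)
  left := c₁ h
  right := c₂ h
  eq := (hrep h).symm

section WeakAction

variable {D : Type*} [AddCommMonoid D] [Module k D]

lemma actMap_one_tmul (hweak : IsWeakAction k A H n c₁ c₂ σ) (h : H) (d : D) :
    actMap σ D h (1 ⊗ₜ d) = 1 ⊗ₜ (h ⊗ₜ d) := by
  simp_rw [actMap_tmul (ℛ k h), hweak.2.1, smul_tmul, ← tmul_sum, smul_tmul', ← sum_tmul,
    sum_counit_smul]

lemma actMap_rightConv [Coalgebra k D] (hrep : IsSweedlerRep k H n c₁ c₂)
    (hweak : IsWeakAction k A H n c₁ c₂ σ) (g : D →ₗ[k] A) (h : H) (y : A ⊗[k] D) :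
    actMap σ D h (rightConv (toConv g) y) =
      rightConv (toConv (TensorProduct.lift σ ∘ₗ g.lTensor H)) (actMap σ D h y) := by
  induction y with
  | zero => simp
  | add y z hy hz => simp [hy, hz]
  | tmul a d =>
    have coassoc (b : A) (d' : D) := congrArg
      (map (LinearMap.mul' k A ∘ₗ map (σ.flip a) (σ.flip b)) ((TensorProduct.mk k H D).flip d') ∘ₗ
        (TensorProduct.assoc k H H H).symm.toLinearMap)
      (sum_tmul_tmul_eq (sweedlerRepr hrep h) (fun i ↦ sweedlerRepr hrep (c₁ h i))
        (fun i ↦ sweedlerRepr hrep (c₂ h i)))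
    simp only [rightConv_tmul _ _ (ℛ k d), actMap_tmul (sweedlerRepr hrep h), map_sum,
      rightConv_tmul_tmul _ _ (sweedlerRepr hrep _) (ℛ k d), hweak.1]
    simp_rw [Finset.sum_comm (t := (ℛ k d).index)]
    exact Finset.sum_congr rfl fun j _ ↦ by simpa [sum_tmul] using coassoc _ _

end WeakAction

section CrossedMul

lemma crossedMul_tmul (a : A) (h : H) (e : A ⊗[k] H) :
    crossedMul k A H σ f (a ⊗ₜ h) e =
      (LinearMap.mulLeft k a).rTensor H (cocycleMul f (actMap σ H h e)) := by
  induction e with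
  | zero => simp
  | add x y hx hy => simp [hx, hy]
  | tmul b l =>
    have comul_comul : comul.rTensor H (comul (R := k) h) =
        ∑ i ∈ (ℛ k h).index, ∑ j ∈ (ℛ k ((ℛ k h).right i)).index,
          ((ℛ k h).left i ⊗ₜ (ℛ k ((ℛ k h).right i)).left j) ⊗ₜ
            (ℛ k ((ℛ k h).right i)).right j := by
      have comul_eq (x : H) := (ℛ k x).eq.symm
      rw [← coassoc_symm_apply]
      simp [comul_eq, tmul_sum]
    simp [crossedMul, comul_comul, ← (ℛ k l).eq, actMap_tmul (ℛ k h), cocycleMul,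
      rightConv_tmul_tmul _ _ (ℛ k _) (ℛ k l), sum_tmul, tmul_sum,
      Finset.sum_comm (s := (ℛ k l).index)]

lemma crossedMul_gam_left (h : H) (e : A ⊗[k] H) :
    crossedMul k A H σ f (gam k A H h) e = cocycleMul f (actMap σ H h e) := by
  simp [gam, crossedMul_tmul]

lemma crossedMul_gam_right (hweak : IsWeakAction k A H n c₁ c₂ σ) (e : A ⊗[k] H) (l : H) :
    crossedMul k A H σ f e (gam k A H l) = cocycleMul f (TensorProduct.assoc k A H H (e ⊗ₜ l)) := by
  induction e with
  | zero => simp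
  | add x y hx hy => simp [add_tmul, hx, hy]
  | tmul a h =>
    simp [gam, crossedMul_tmul, actMap_one_tmul hweak, cocycleMul,
      rightConv_tmul_tmul _ _ (ℛ k h) (ℛ k l)]

end CrossedMul

section Associativity

lemma toConv_lift_mul_apply (hrep : IsSweedlerRep k H n c₁ c₂) (f g : H →ₗ[k] H →ₗ[k] A)
    (h l : H) :
    (toConv (TensorProduct.lift f) * toConv (TensorProduct.lift g)) (h ⊗ₜ l) =
      ∑ i ∈ Finset.range (n h), ∑ j ∈ Finset.range (n l),
        f (c₁ h i) (c₁ l j) * g (c₂ h i) (c₂ l j) := by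
  simp [LinearMap.convMul_apply, hrep h, hrep l, sum_tmul, tmul_sum,
    Finset.sum_comm (s := .range (n l))]

lemma toConv_lift_mul_inv (hrep : IsSweedlerRep k H n c₁ c₂)
    (hinv : IsConvInverse k A H n c₁ c₂ f finv) :
    toConv (TensorProduct.lift f) * toConv (TensorProduct.lift finv) = 1 := by
  ext h l
  simpa [Algebra.algebraMap_eq_smul_one, mul_comm] using
    (toConv_lift_mul_apply hrep f finv h l).trans (hinv h l).1

lemma toConv_lift_inv_mul (hrep : IsSweedlerRep k H n c₁ c₂)
    (hinv : IsConvInverse k A H n c₁ c₂ f finv) :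
    toConv (TensorProduct.lift finv) * toConv (TensorProduct.lift f) = 1 := by
  ext h l
  simpa [Algebra.algebraMap_eq_smul_one, mul_comm] using
    (toConv_lift_mul_apply hrep finv f h l).trans (hinv h l).2

lemma toConv_cocycle_eq (hrep : IsSweedlerRep k H n c₁ c₂)
    (hcocycle : IsCocycle k A H n c₁ c₂ σ f) :
    toConv ((toConv (TensorProduct.lift σ ∘ₗ (TensorProduct.lift f).lTensor H) *
        toConv (TensorProduct.lift f ∘ₗ (LinearMap.mul' k H).lTensor H)).ofConv ∘ₗ
          (TensorProduct.assoc k H H H).toLinearMap) =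
      toConv ((TensorProduct.rid k A).toLinearMap ∘ₗ map (TensorProduct.lift f) counit) *
        toConv (TensorProduct.lift f ∘ₗ (LinearMap.mul' k H).rTensor H) := by
  ext h l m
  have sum_counit (x : A) (y : H) :
      ∑ p ∈ Finset.range (n m), counit (R := k) (c₁ m p) • (x * f y (c₂ m p)) = x * f y m := by
    simp_rw [← mul_smul_comm, ← map_smul, ← Finset.mul_sum, ← map_sum]
    exact congrArg (x * f y ·) (sum_counit_smul (sweedlerRepr hrep m))
  simpa [LinearMap.convMul_apply, hrep h, hrep l, hrep m, sum_tmul, tmul_sum, sum_counit,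
    Finset.sum_comm (s := .range (n m)),
    Finset.sum_comm (s := .range (n l)) (t := .range (n h))] using hcocycle h l m

lemma cocycleMul_actMap_cocycleMul (hrep : IsSweedlerRep k H n c₁ c₂)
    (hweak : IsWeakAction k A H n c₁ c₂ σ) (h : H) (z : A ⊗[k] (H ⊗[k] H)) :
    cocycleMul f (actMap σ H h (cocycleMul f z)) =
      (LinearMap.mul' k H ∘ₗ (LinearMap.mul' k H).lTensor H).lTensor A
        (rightConv (toConv (TensorProduct.lift σ ∘ₗ (TensorProduct.lift f).lTensor H) *
            toConv (TensorProduct.lift f ∘ₗ (LinearMap.mul' k H).lTensor H))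
          (actMap σ (H ⊗[k] H) h z)) := by
  have comul_lTensor_mul := (CoalgHom.lTensor H (Bialgebra.mulCoalgHom k H)).map_comp_comul
  simp only [cocycleMul, LinearMap.comp_apply, LinearMap.lTensor_comp, rightConv_mul,
    ← actMap_rightConv hrep hweak, actMap_lTensor]
  exact congrArg _ (lTensor_rightConv comul_lTensor_mul _ _).symm

lemma crossedMul_gam_gam_assoc (hrep : IsSweedlerRep k H n c₁ c₂)
    (hweak : IsWeakAction k A H n c₁ c₂ σ) (hcocycle : IsCocycle k A H n c₁ c₂ σ f)
    (h l : H) (e : A ⊗[k] H) :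
    crossedMul k A H σ f (crossedMul k A H σ f (gam k A H h) e) (gam k A H l) =
      crossedMul k A H σ f (gam k A H h) (crossedMul k A H σ f e (gam k A H l)) := by
  have comul_assoc := (Coalgebra.TensorProduct.assoc k k H H H).toCoalgHom.map_comp_comul
  have mul_mul_eq : LinearMap.mul' k H ∘ₗ (LinearMap.mul' k H).rTensor H =
      (LinearMap.mul' k H ∘ₗ (LinearMap.mul' k H).lTensor H) ∘ₗ
        (TensorProduct.assoc k H H H).toLinearMap := by
    ext; simp [mul_assoc]
  rw [crossedMul_gam_left, crossedMul_gam_left, crossedMul_gam_right hweak,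
    crossedMul_gam_right hweak, cocycleMul_assoc_cocycleMul_tmul,
    cocycleMul_actMap_cocycleMul hrep hweak, ← toConv_cocycle_eq hrep hcocycle,
    actMap_assoc_tmul, mul_mul_eq, LinearMap.lTensor_comp, LinearMap.comp_apply]
  exact congrArg _ (lTensor_rightConv comul_assoc _ _)

end Associativity

section MulGam

lemma convMul_gam (hweak : IsWeakAction k A H n c₁ c₂ σ) (u : H →ₗ[k] A ⊗[k] H) :
    convMul k A H σ f u (gam k A H) = cocycleMul f ∘ₗ graph u := by
  ext h
  simp [convMul, graph, ← (ℛ k h).eq, crossedMul_gam_right hweak]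

lemma graph_convMul_gam (hweak : IsWeakAction k A H n c₁ c₂ σ) (u : H →ₗ[k] A ⊗[k] H) :
    graph (convMul k A H σ f u (gam k A H)) =
      (rightConv (toConv .id)).lTensor A ∘ₗ rightConv (toConv (TensorProduct.lift f)) ∘ₗ
        graph u := by
  ext h
  have coassoc := congrArg
    ((TensorProduct.assoc k A H H).toLinearMap ∘ₗ
      (cocycleMul f ∘ₗ (TensorProduct.assoc k A H H).toLinearMap).rTensor H ∘ₗ
        (TensorProduct.assoc k (A ⊗[k] H) H H).symm.toLinearMap ∘ₗ u.rTensor (H ⊗[k] H))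
    (sum_tmul_tmul_eq (ℛ k h) (fun i ↦ ℛ k ((ℛ k h).left i)) (fun i ↦ ℛ k ((ℛ k h).right i)))
  have graph_apply (x : H) : graph u x =
      ∑ i ∈ (ℛ k x).index, TensorProduct.assoc k A H H (u ((ℛ k x).left i) ⊗ₜ (ℛ k x).right i) := by
    simp [graph, ← (ℛ k x).eq]
  rw [LinearMap.comp_apply, LinearMap.comp_apply, graph_apply, map_sum, map_sum]
  simp_rw [lTensor_rightConv_id_rightConv_assoc_tmul _ (ℛ k _)]
  rw [convMul_gam hweak, graph]
  simpa [← (ℛ k h).eq, graph_apply, sum_tmul] using coassoc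

lemma convMul_gam_injective (hrep : IsSweedlerRep k H n c₁ c₂)
    (hweak : IsWeakAction k A H n c₁ c₂ σ) (hinv : IsConvInverse k A H n c₁ c₂ f finv) :
    Function.Injective fun u ↦ convMul k A H σ f u (gam k A H) := by
  intro u v huv
  have rightConv_eq : rightConv (toConv (TensorProduct.lift f)) ∘ₗ graph u =
      rightConv (toConv (TensorProduct.lift f)) ∘ₗ graph v := by
    refine (LinearMap.cancel_left lTensor_rightConv_id_injective).1 ?_
    rw [← graph_convMul_gam hweak, ← graph_convMul_gam hweak]
    exact congrArg graph huv
  have rightConv_inj := rightConv_injective (R := k) (A := A) (C := H ⊗[k] H)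
    (toConv_lift_mul_inv hrep hinv)
  exact graph_injective ((LinearMap.cancel_left rightConv_inj).1 rightConv_eq)

end MulGam

section GammaInv

lemma graph_gammaInv (h : H) :
    graph (gammaInv k A H finv) h =
      rightConv (toConv (TensorProduct.lift finv)) (1 ⊗ₜ (antipode k).rTensor H (comul h)) := by
  let φ : H ⊗[k] H →ₗ[k] A := TensorProduct.lift finv ∘ₗ (antipode k).rTensor H
  let shuffle (ψ : H ⊗[k] H →ₗ[k] A ⊗[k] H) : H ⊗[k] (H ⊗[k] H) →ₗ[k] A ⊗[k] (H ⊗[k] H) :=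
    (TensorProduct.leftComm k H A H).toLinearMap ∘ₗ map (antipode k) ψ
  have comul_left (i) := (ℛ k ((ℛ k h).left i)).eq.symm
  have comul_right (i) := (ℛ k ((ℛ k h).right i)).eq.symm
  have graph_eq : graph (gammaInv k A H finv) h =
      shuffle ((φ ∘ₗ comul).rTensor H)
        (TensorProduct.assoc k H H H (comul.rTensor H (comul h))) := by
    simp [graph, gammaInv, shuffle, φ, ← (ℛ k h).eq, comul_left, sum_tmul]
  have rightConv_eq :
      rightConv (toConv (TensorProduct.lift finv)) (1 ⊗ₜ (antipode k).rTensor H (comul h)) =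
        shuffle (φ.rTensor H ∘ₗ (TensorProduct.assoc k H H H).symm.toLinearMap ∘ₗ comul.lTensor H)
          (TensorProduct.assoc k H H H (comul.rTensor H (comul h))) := by
    have comul_antipode (x : H) : comul (antipode k x) =
        map (antipode k) (antipode k) (TensorProduct.comm k H H (comul x)) :=
      LinearMap.congr_fun comul_comp_antipode x
    simp only [rightConv, shuffle, φ, ← (ℛ k h).eq, comul_left, comul_right, comul_antipode,
      comul_tmul, comm_tmul, assoc_tmul, assoc_symm_tmul, leftComm_tmul,
      AlgebraTensorModule.tensorTensorTensorComm_tmul, map_tmul, lift.tmul, LinearMap.lTensor_tmul,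
      LinearMap.rTensor_tmul, LinearMap.comp_apply, LinearEquiv.coe_coe, LinearMap.mul'_apply,
      one_mul, map_sum, tmul_sum, sum_tmul]
    exact Finset.sum_congr rfl fun _ _ ↦ Finset.sum_comm
  have shuffle_lTensor_comul (ψ : H ⊗[k] H →ₗ[k] A ⊗[k] H) : shuffle ψ ∘ₗ comul.lTensor H =
      (TensorProduct.leftComm k H A H).toLinearMap ∘ₗ map (antipode k) (ψ ∘ₗ comul) := by
    simp [shuffle, LinearMap.comp_assoc, LinearMap.map_comp_lTensor]
  rw [graph_eq, rightConv_eq, coassoc_apply, ← LinearMap.comp_apply (shuffle _),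
    ← LinearMap.comp_apply (shuffle _), shuffle_lTensor_comul, shuffle_lTensor_comul,
    LinearMap.rTensor_comp, LinearMap.comp_assoc, LinearMap.comp_assoc, LinearMap.comp_assoc,
    coassoc_symm]

lemma gammaInv_convMul_gam (hrep : IsSweedlerRep k H n c₁ c₂)
    (hweak : IsWeakAction k A H n c₁ c₂ σ) (hinv : IsConvInverse k A H n c₁ c₂ f finv) :
    convMul k A H σ f (gammaInv k A H finv) (gam k A H) = convOne k A H := by
  ext h
  rw [convMul_gam hweak, LinearMap.comp_apply, graph_gammaInv, cocycleMul, LinearMap.comp_apply,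
    ← LinearMap.comp_apply (rightConv _), ← rightConv_mul, toConv_lift_inv_mul hrep hinv,
    rightConv_one, LinearMap.id_apply, LinearMap.lTensor_tmul, mul_antipode_rTensor_comul_apply]
  simp [convOne, oneE, Algebra.algebraMap_eq_smul_one]

end GammaInv

section Unit

lemma gam_convMul_convOne (hweak : IsWeakAction k A H n c₁ c₂ σ) (hnormal : IsNormal k A H f) :
    convMul k A H σ f (gam k A H) (convOne k A H) = gam k A H := by
  have gam_mul_one (h : H) : crossedMul k A H σ f (gam k A H h) (oneE k A H) = gam k A H h := by
    have oneE_eq : oneE k A H = gam k A H 1 := rfl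
    rw [oneE_eq, crossedMul_gam_right hweak]
    simpa [gam, cocycleMul, rightConv, ← (ℛ k h).eq, (hnormal _).1,
      Algebra.TensorProduct.one_def, sum_tmul, tmul_sum] using sum_counit_smul_tmul (1 : A) (ℛ k h)
  have sum_smul_gam (h : H) : ∑ i ∈ (ℛ k h).index,
      counit (R := k) ((ℛ k h).right i) • gam k A H ((ℛ k h).left i) = gam k A H h := by
    simp_rw [← map_smul, ← map_sum, sum_smul_counit]
  ext h
  simpa [convMul, convOne, ← (ℛ k h).eq, gam_mul_one] using sum_smul_gam h

lemma convOne_convMul_gam (hweak : IsWeakAction k A H n c₁ c₂ σ) (hnormal : IsNormal k A H f) :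
    convMul k A H σ f (convOne k A H) (gam k A H) = gam k A H := by
  have one_mul_gam (h : H) : crossedMul k A H σ f (oneE k A H) (gam k A H h) = gam k A H h := by
    rw [crossedMul_gam_right hweak]
    simpa [oneE, gam, cocycleMul, rightConv, ← (ℛ k h).eq, (hnormal _).2,
      Algebra.TensorProduct.one_def, tmul_sum] using sum_counit_smul_tmul (1 : A) (ℛ k h)
  have sum_smul_gam (h : H) : ∑ i ∈ (ℛ k h).index,
      counit (R := k) ((ℛ k h).left i) • gam k A H ((ℛ k h).right i) = gam k A H h := by
    simp_rw [← map_smul, ← map_sum, sum_counit_smul]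
  ext h
  simpa [convMul, convOne, ← (ℛ k h).eq, one_mul_gam] using sum_smul_gam h

lemma convMul_gam_gam_assoc (hrep : IsSweedlerRep k H n c₁ c₂)
    (hweak : IsWeakAction k A H n c₁ c₂ σ) (hcocycle : IsCocycle k A H n c₁ c₂ σ f)
    (u : H →ₗ[k] A ⊗[k] H) :
    convMul k A H σ f (convMul k A H σ f (gam k A H) u) (gam k A H) =
      convMul k A H σ f (gam k A H) (convMul k A H σ f u (gam k A H)) := by
  ext h
  have comul_eq (x : H) := (ℛ k x).eq.symm
  have coassoc := congrArg
    (TensorProduct.lift (crossedMul k A H σ f ∘ₗ gam k A H) ∘ₗ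
      (TensorProduct.lift (crossedMul k A H σ f) ∘ₗ map u (gam k A H)).lTensor H)
    (sum_tmul_tmul_eq (ℛ k h) (fun i ↦ ℛ k ((ℛ k h).left i)) (fun i ↦ ℛ k ((ℛ k h).right i)))
  simpa [convMul, comul_eq, crossedMul_gam_gam_assoc hrep hweak hcocycle] using coassoc

end Unit

end CrossedProduct

theorem gamma_convolution_invertible_general
    (k A H : Type*) [CommRing k] [Ring A] [Algebra k A] [Ring H] [HopfAlgebra k H]
    (σ : H →ₗ[k] A →ₗ[k] A) (f finv : H →ₗ[k] H →ₗ[k] A)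
    (n : H → ℕ) (c₁ c₂ : H → ℕ → H)
    (hrep : IsSweedlerRep k H n c₁ c₂)
    (hweak : IsWeakAction k A H n c₁ c₂ σ)
    (hnormal : IsNormal k A H f)
    (hcocycle : IsCocycle k A H n c₁ c₂ σ f)
    (hinv : IsConvInverse k A H n c₁ c₂ f finv) :
    convMul k A H σ f (gam k A H) (gammaInv k A H finv) = convOne k A H ∧
    convMul k A H σ f (gammaInv k A H finv) (gam k A H) = convOne k A H := by
  have left_inv := CrossedProduct.gammaInv_convMul_gam hrep hweak hinv
  refine ⟨CrossedProduct.convMul_gam_injective hrep hweak hinv ?_, left_inv⟩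
  simp only [CrossedProduct.convMul_gam_gam_assoc hrep hweak hcocycle, left_inv,
    CrossedProduct.gam_convMul_convOne hweak hnormal,
    CrossedProduct.convOne_convMul_gam hweak hnormal]

/-- If `E = A #_f H` is a crossed product and `f` is convolution invertible,
then `γ : H → E`, `γ(h) = 1 # h`, is convolution invertible in `Hom_k(H, E)` and its
convolution inverse is `γ⁻¹(h) = f⁻¹(S(h⁽²⁾), h⁽³⁾) # S(h⁽¹⁾)`. -/
theorem gamma_convolution_invertible
    (k A H : Type*) [CommRing k] [Ring A] [Algebra k A] [Ring H] [HopfAlgebra k H]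
    (σ : H →ₗ[k] A →ₗ[k] A) (f finv : H →ₗ[k] H →ₗ[k] A)
    (n : H → ℕ) (c₁ c₂ : H → ℕ → H)
    (hrep : IsSweedlerRep k H n c₁ c₂)
    (hweak : IsWeakAction k A H n c₁ c₂ σ)
    (hnormal : IsNormal k A H f)
    (hcocycle : IsCocycle k A H n c₁ c₂ σ f)
    (htwisted : IsTwistedModule k A H n c₁ c₂ σ f)
    (hinv : IsConvInverse k A H n c₁ c₂ f finv) :
    convMul k A H σ f (gam k A H) (gammaInv k A H finv) = convOne k A H ∧
    convMul k A H σ f (gammaInv k A H finv) (gam k A H) = convOne k A H :=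
  gamma_convolution_invertible_general k A H σ f finv n c₁ c₂ hrep hweak hnormal hcocycle hinv
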